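/- Let n, f, b be natural numbers with f ≤ n, n ≤ 3f, and n - b ≤ 2f, and let B be any finite subset of Fin n of cardinality b. Then there exist finite subsets Q₁, Q₂ of Fin n, each of cardinality n - f, such that Q₁ ∩ Q₂ ⊆ B and the cardinality of Q₁ ∩ Q₂ is at most f. -/

import Mathlib

/-!
Pass to complements: two sets `F₁, F₂` of size `f` are needed whose union contains `Bᶜ` and
has at least `n - f` elements. Since `|Bᶜ| = n - b ≤ 2f`, the set `Bᶜ` extends to a set `U` of
size `min (2f) n`, which is at least `n - f` because `n ≤ 3f`. Any such `U` is covered by two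
sets of size `f`, and `Q₁ = F₁ᶜ`, `Q₂ = F₂ᶜ` then meet inside `Uᶜ ⊆ B`.
-/

theorem stmt_1 (n f b : ℕ) (hf : f ≤ n) (h3 : n ≤ 3 * f) (h2 : n - b ≤ 2 * f)
    (B : Finset (Fin n)) (hB : B.card = b) :
    ∃ Q₁ Q₂ : Finset (Fin n), Q₁.card = n - f ∧ Q₂.card = n - f ∧
      Q₁ ∩ Q₂ ⊆ B ∧ (Q₁ ∩ Q₂).card ≤ f := by
  have hBc : Bᶜ.card = n - b := by rw [Finset.card_compl, Fintype.card_fin, hB]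
  obtain ⟨U, hBU, hU⟩ := Finset.exists_superset_card_eq (s := Bᶜ) (n := min (2 * f) n)
    (by omega) (by rw [Fintype.card_fin]; omega)
  obtain ⟨F₁, hF₁U, hF₁⟩ := Finset.exists_subset_card_eq (s := U) (n := f) (by omega)
  have hd : (U \ F₁).card = min (2 * f) n - f := by
    rw [Finset.card_sdiff_of_subset hF₁U, hU, hF₁]
  obtain ⟨F₂, hUF₂, hF₂⟩ := Finset.exists_superset_card_eq (s := U \ F₁) (n := f)
    (by omega) (by rw [Fintype.card_fin]; omega)
  have hsub : F₁ᶜ ∩ F₂ᶜ ⊆ Uᶜ := by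
    intro x hx
    simp only [Finset.mem_inter, Finset.mem_compl] at hx ⊢
    exact fun hxU => hx.2 (hUF₂ (Finset.mem_sdiff.2 ⟨hxU, hx.1⟩))
  refine ⟨F₁ᶜ, F₂ᶜ, ?_, ?_, ?_, ?_⟩
  · rw [Finset.card_compl, Fintype.card_fin, hF₁]
  · rw [Finset.card_compl, Fintype.card_fin, hF₂]
  · intro x hx
    by_contra hxB
    exact Finset.mem_compl.1 (hsub hx) (hBU (Finset.mem_compl.2 hxB))
  · have h := Finset.card_le_card hsub
    rw [Finset.card_compl U, Fintype.card_fin, hU] at h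
    omega
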